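/- arXiv:2401.10089 — 2 statements merged into one kernel-verified Lean document; each statement's English description precedes it below -/
import Mathlib

section
/- Fix an integer k ≥ 1. The set of polynomials z ∈ ℂ[X] obtainable as outputs of degree-optimal evaluation schemes with k multiplications is unchanged if the coefficients of the first multiplication are restricted to satisfy h_{1,1} = g_{1,1} = 0 and h_{1,2} = g_{1,2} = 1 (i.e., to P_3 = X²): every polynomial obtainable by some scheme is obtainable by a scheme satisfying this restriction, and conversely. -/
open Polynomial

/-- The intermediate polynomials `P` of a degree-optimal evaluation scheme with `k`
multiplications and coefficients `h g`: `P 1 = 1`, `P 2 = X`, and for `1 ≤ j ≤ k`,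
`P (j+2) = (∑_{i=1}^{j+1} h j i • P i) * (∑_{i=1}^{j+1} g j i • P i)`. -/
def SchemeP (k : ℕ) (h g : ℕ → ℕ → ℂ) (P : ℕ → Polynomial ℂ) : Prop :=
  P 1 = 1 ∧ P 2 = Polynomial.X ∧
    ∀ j, 1 ≤ j → j ≤ k →
      P (j + 2) =
        (∑ i ∈ Finset.Icc 1 (j + 1), Polynomial.C (h j i) * P i) *
        (∑ i ∈ Finset.Icc 1 (j + 1), Polynomial.C (g j i) * P i)

/-- The output polynomial `z = ∑_{i=1}^{k+2} y i • P i` of a degree-optimal evaluation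
scheme with `k` multiplications. -/
noncomputable def SchemeOutput (k : ℕ) (y : ℕ → ℂ) (P : ℕ → Polynomial ℂ) : Polynomial ℂ :=
  ∑ i ∈ Finset.Icc 1 (k + 2), Polynomial.C (y i) * P i

/-!
Only the span of the intermediate values `1, x, P 3, P 4, …` matters. Since
`P 3 = (a + b x) (c + d x)` lies in the span of `1, x, x ^ 2`, replacing `P 3` by `x ^ 2` loses
nothing: every linear combination of the old values is a linear combination of the new ones, so
all later products can be kept. Nothing here is special to polynomials; `x` may be any element of
an algebra, for instance a matrix.
-/

section Substitution

variable {ι R M : Type*} [DecidableEq ι] [Semiring R] [AddCommMonoid M] [Module R M]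

/-- The coefficients of `∑ i, c i • v i` after the substitution `v m = ∑ i, a i • w i`, where the
family `w` agrees with `v` away from `m`. -/
def substCoeff (m : ι) (a c : ι → R) : ι → R :=
  Function.update c m 0 + c m • a

theorem sum_substCoeff_smul_update {s : Finset ι} {m : ι} {a : ι → R} {v : ι → M} {w : M}
    (hm : m ∈ s) (hv : v m = ∑ i ∈ s, a i • Function.update v m w i) (c : ι → R) :
    ∑ i ∈ s, substCoeff m a c i • Function.update v m w i = ∑ i ∈ s, c i • v i := by
  have off_m : ∑ i ∈ s, Function.update c m 0 i • Function.update v m w i =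
      ∑ i ∈ s.erase m, c i • v i := by
    rw [← Finset.add_sum_erase s _ hm, Function.update_self, zero_smul, zero_add]
    refine Finset.sum_congr rfl fun i hi => ?_
    rw [Function.update_of_ne (Finset.ne_of_mem_erase hi),
      Function.update_of_ne (Finset.ne_of_mem_erase hi)]
  have at_m : ∑ i ∈ s, (c m • a) i • Function.update v m w i = c m • v m := by
    simp only [Pi.smul_apply, smul_assoc, ← Finset.smul_sum, ← hv]
  simp only [substCoeff, Pi.add_apply, add_smul, Finset.sum_add_distrib]
  rw [off_m, at_m, Finset.sum_erase_add s _ hm]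

end Substitution

section Scheme

variable {R A : Type*} [CommSemiring R] [Semiring A] [Algebra R A]

/-- `P` lists the intermediate values of the evaluation scheme with `k` multiplications and
coefficients `h`, `g`, run at an element `x` of an algebra. As in `SchemeP`, values are numbered
from `1`; the terms `P 0` and `P i` with `k + 2 < i` are unconstrained. -/
structure IsEvalScheme (k : ℕ) (x : A) (h g : ℕ → ℕ → R) (P : ℕ → A) : Prop where
  one : P 1 = 1
  two : P 2 = x
  mul : ∀ j, 1 ≤ j → j ≤ k →
    P (j + 2) = (∑ i ∈ Finset.Icc 1 (j + 1), h j i • P i) * ∑ i ∈ Finset.Icc 1 (j + 1), g j i • P i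

/-- The coefficients of `(p 1 + p 2 * x) * (q 1 + q 2 * x)` with respect to `1, x, x ^ 2`, placed
at the indices `1, 2, 3`. -/
def quadraticCoeff (p q : ℕ → R) : ℕ → R :=
  Pi.single 1 (p 1 * q 1) + Pi.single 2 (p 1 * q 2 + p 2 * q 1) + Pi.single 3 (p 2 * q 2)

/-- The coefficients `h` of a scheme after its first product, of coefficients `a`, has been
replaced by `x ^ 2`; row `1` selects the factor `x`. -/
def squareFirstCoeff (a : ℕ → R) (h : ℕ → ℕ → R) : ℕ → ℕ → R :=
  Function.update (fun j => substCoeff 3 a (h j)) 1 (Pi.single 2 1)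

namespace IsEvalScheme

variable {k : ℕ} {x : A} {h g : ℕ → ℕ → R} {P : ℕ → A}

theorem sum_Icc_two (hP : IsEvalScheme k x h g P) (c : ℕ → R) :
    ∑ i ∈ Finset.Icc 1 2, c i • P i = c 1 • (1 : A) + c 2 • x := by
  rw [Finset.sum_Icc_succ_top (by norm_num), Finset.Icc_self, Finset.sum_singleton, hP.one, hP.two]

theorem three_eq (hP : IsEvalScheme k x h g P) (hk : 1 ≤ k) :
    P 3 = (h 1 1 * g 1 1) • (1 : A) + (h 1 1 * g 1 2 + h 1 2 * g 1 1) • x +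
      (h 1 2 * g 1 2) • x ^ 2 := by
  rw [hP.mul 1 le_rfl hk, hP.sum_Icc_two, hP.sum_Icc_two]
  simp only [add_mul, mul_add, smul_mul_smul_comm, one_mul, mul_one, ← sq x, add_smul]
  abel

theorem three_eq_sum_quadraticCoeff (hP : IsEvalScheme k x h g P) (hk : 1 ≤ k) {n : ℕ}
    (hn : 3 ≤ n) :
    P 3 = ∑ i ∈ Finset.Icc 1 n,
      quadraticCoeff (h 1) (g 1) i • Function.update P 3 (x ^ 2) i := by
  have h1 : 1 ∈ Finset.Icc 1 n := Finset.mem_Icc.2 ⟨le_rfl, by omega⟩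
  have h2 : 2 ∈ Finset.Icc 1 n := Finset.mem_Icc.2 ⟨by omega, by omega⟩
  have h3 : 3 ∈ Finset.Icc 1 n := Finset.mem_Icc.2 ⟨by omega, hn⟩
  simp only [quadraticCoeff, Pi.add_apply, add_smul, Finset.sum_add_distrib, Pi.single_apply,
    ite_smul, zero_smul, Finset.sum_ite_eq', h1, h2, h3, if_true]
  simpa [hP.one, hP.two, add_smul] using hP.three_eq hk

theorem sum_substCoeff_smul (hP : IsEvalScheme k x h g P) (hk : 1 ≤ k) {n : ℕ} (hn : 3 ≤ n)
    (c : ℕ → R) :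
    ∑ i ∈ Finset.Icc 1 n,
        substCoeff 3 (quadraticCoeff (h 1) (g 1)) c i • Function.update P 3 (x ^ 2) i =
      ∑ i ∈ Finset.Icc 1 n, c i • P i :=
  sum_substCoeff_smul_update (Finset.mem_Icc.2 ⟨by norm_num, hn⟩)
    (hP.three_eq_sum_quadraticCoeff hk hn) c

theorem squareFirst (hP : IsEvalScheme k x h g P) (hk : 1 ≤ k) :
    IsEvalScheme k x (squareFirstCoeff (quadraticCoeff (h 1) (g 1)) h)
      (squareFirstCoeff (quadraticCoeff (h 1) (g 1)) g) (Function.update P 3 (x ^ 2)) where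
  one := by rw [Function.update_of_ne (by norm_num), hP.one]
  two := by rw [Function.update_of_ne (by norm_num), hP.two]
  mul j hj hjk := by
    obtain rfl | hj' := hj.eq_or_lt
    · simp [squareFirstCoeff, Finset.sum_Icc_succ_top, hP.two, sq]
    · simp only [squareFirstCoeff, Function.update_of_ne hj'.ne']
      rw [hP.sum_substCoeff_smul hk (by omega), hP.sum_substCoeff_smul hk (by omega),
        Function.update_of_ne (by omega), hP.mul j hj hjk]

end IsEvalScheme

theorem restricted_schemes_give_same_polynomials_general (R : Type*) {A : Type*} [CommSemiring R]
    [Semiring A] [Algebra R A] (x : A) {k : ℕ} (hk : 1 ≤ k) :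
    {z : A | ∃ (h g : ℕ → ℕ → R) (y : ℕ → R) (P : ℕ → A),
        IsEvalScheme k x h g P ∧ z = ∑ i ∈ Finset.Icc 1 (k + 2), y i • P i} =
    {z : A | ∃ (h g : ℕ → ℕ → R) (y : ℕ → R) (P : ℕ → A),
        IsEvalScheme k x h g P ∧ h 1 1 = 0 ∧ g 1 1 = 0 ∧ h 1 2 = 1 ∧ g 1 2 = 1 ∧
        z = ∑ i ∈ Finset.Icc 1 (k + 2), y i • P i} := by
  ext z
  constructor
  · rintro ⟨h, g, y, P, hP, rfl⟩
    refine ⟨_, _, _, _, hP.squareFirst hk, ?_, ?_, ?_, ?_,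
      (hP.sum_substCoeff_smul hk (by omega) y).symm⟩ <;> simp [squareFirstCoeff]
  · rintro ⟨h, g, y, P, hP, -, -, -, -, hz⟩
    exact ⟨h, g, y, P, hP, hz⟩

end Scheme

theorem schemeP_iff_isEvalScheme {k : ℕ} {h g : ℕ → ℕ → ℂ} {P : ℕ → ℂ[X]} :
    SchemeP k h g P ↔ IsEvalScheme k X h g P := by
  simp only [SchemeP, ← smul_eq_C_mul]
  exact ⟨fun ⟨one, two, mul⟩ => ⟨one, two, mul⟩, fun hP => ⟨hP.one, hP.two, hP.mul⟩⟩

theorem schemeOutput_eq_sum_smul (k : ℕ) (y : ℕ → ℂ) (P : ℕ → ℂ[X]) :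
    SchemeOutput k y P = ∑ i ∈ Finset.Icc 1 (k + 2), y i • P i := by
  simp only [SchemeOutput, smul_eq_C_mul]

/-- The set of polynomials obtainable by degree-optimal evaluation schemes with `k`
multiplications is unchanged under the restriction
`h 1 1 = g 1 1 = 0`, `h 1 2 = g 1 2 = 1` (i.e. `P 3 = X ^ 2`). -/
theorem restricted_schemes_give_same_polynomials (k : ℕ) (hk : 1 ≤ k) :
    {z : Polynomial ℂ | ∃ (h g : ℕ → ℕ → ℂ) (y : ℕ → ℂ) (P : ℕ → Polynomial ℂ),
        SchemeP k h g P ∧ z = SchemeOutput k y P} =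
    {z : Polynomial ℂ | ∃ (h g : ℕ → ℕ → ℂ) (y : ℕ → ℂ) (P : ℕ → Polynomial ℂ),
        SchemeP k h g P ∧ h 1 1 = 0 ∧ g 1 1 = 0 ∧ h 1 2 = 1 ∧ g 1 2 = 1 ∧
        z = SchemeOutput k y P} := by
  simp only [schemeP_iff_isEvalScheme, schemeOutput_eq_sum_smul]
  exact restricted_schemes_give_same_polynomials_general ℂ X hk
end

section
/- Fix an integer k ≥ 1 and a degree-optimal evaluation scheme with k multiplications whose coefficients satisfy h_{1,2} = g_{1,2} = 1, so that P_3 = (h_{1,1} + X)(g_{1,1} + X) = α + βX + X² with α = h_{1,1} g_{1,1} and β = h_{1,1} + g_{1,1}. Define a new scheme with h̃_{1,1} = g̃_{1,1} = 0, h̃_{1,2} = g̃_{1,2} = 1 (so P̃_3 = X²), and for each j ≥ 2 set h̃_{j,1} = h_{j,1} + α h_{j,3}, g̃_{j,1} = g_{j,1} + α g_{j,3}, h̃_{j,2} = h_{j,2} + β h_{j,3}, g̃_{j,2} = g_{j,2} + β g_{j,3}, keeping all other h, g coefficients unchanged, and set ỹ_1 = y_1 + α y_3, ỹ_2 = y_2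 + β y_3, ỹ_i = y_i otherwise. Then P̃_j = P_j for all 4 ≤ j ≤ k+2 and the output polynomials coincide: z̃ = z. -/
open Polynomial

/-!
Since `P₃ = X² + α P₁ + β P₂`, replacing `P₃` by `X²` in a linear combination `∑ yᵢ Pᵢ` is
compensated by adding `α y₃` to `y₁` and `β y₃` to `y₂`. Both factors of each later multiplication
and the output are such combinations, so none of them changes.
-/

open Function (update)

section LinearCombinations

variable {R M : Type*} [Semiring R] [AddCommMonoid M] [Module R M]

theorem sum_add_mul_smul_update {ι : Type*} [DecidableEq ι] {s : Finset ι} {m : ι} (hm : m ∈ s)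
    {P : ι → M} {Q : M} {c : ι → R} (hPm : P m = Q + ∑ i ∈ s, c i • update P m Q i) (y : ι → R) :
    ∑ i ∈ s, (y i + y m * c i) • update P m Q i = ∑ i ∈ s, y i • P i := by
  have off_m : ∑ i ∈ s.erase m, y i • update P m Q i = ∑ i ∈ s.erase m, y i • P i :=
    Finset.sum_congr rfl fun i hi => by rw [Function.update_of_ne (Finset.ne_of_mem_erase hi)]
  calc ∑ i ∈ s, (y i + y m * c i) • update P m Q i
      = ∑ i ∈ s, y i • update P m Q i + y m • ∑ i ∈ s, c i • update P m Q i := by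
        simp only [add_smul, mul_smul, Finset.sum_add_distrib, Finset.smul_sum]
    _ = y m • (Q + ∑ i ∈ s, c i • update P m Q i) + ∑ i ∈ s.erase m, y i • P i := by
        rw [← Finset.add_sum_erase s _ hm, off_m, Function.update_self, smul_add, add_right_comm]
    _ = ∑ i ∈ s, y i • P i := by rw [← hPm, Finset.add_sum_erase s (fun i => y i • P i) hm]

/-- The coefficients that express `∑ y i • P i` in terms of `P` with its entry
`P 3 = Q + (a • P 1 + b • P 2)` replaced by `Q`. -/
def shiftCoeff (a b : R) (y : ℕ → R) (i : ℕ) : R :=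
  y i + y 3 * (Pi.single 1 a + Pi.single 2 b : ℕ → R) i

@[simp]
theorem shiftCoeff_one (a b : R) (y : ℕ → R) : shiftCoeff a b y 1 = y 1 + y 3 * a := by
  simp [shiftCoeff]

@[simp]
theorem shiftCoeff_two (a b : R) (y : ℕ → R) : shiftCoeff a b y 2 = y 2 + y 3 * b := by
  simp [shiftCoeff]

theorem shiftCoeff_of_three_le (a b : R) (y : ℕ → R) {i : ℕ} (hi : 3 ≤ i) :
    shiftCoeff a b y i = y i := by
  simp [shiftCoeff, show i ≠ 1 by lia, show i ≠ 2 by lia]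

theorem sum_Icc_shiftCoeff_smul_update {a b : R} {P : ℕ → M} {Q : M}
    (hP3 : P 3 = Q + (a • P 1 + b • P 2)) (y : ℕ → R) {n : ℕ} (hn : 3 ≤ n) :
    ∑ i ∈ Finset.Icc 1 n, shiftCoeff a b y i • update P 3 Q i =
      ∑ i ∈ Finset.Icc 1 n, y i • P i := by
  refine sum_add_mul_smul_update (Finset.mem_Icc.2 ⟨by lia, hn⟩) ?_ y
  have one_mem : 1 ∈ Finset.Icc 1 n := Finset.mem_Icc.2 ⟨le_rfl, by lia⟩
  have two_mem : 2 ∈ Finset.Icc 1 n := Finset.mem_Icc.2 ⟨by lia, by lia⟩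
  simp [hP3, add_smul, Finset.sum_add_distrib, Pi.single_apply, ite_smul, one_mem, two_mem]

/-- The coefficients of the left (or right) factors of the shifted scheme: the first factor becomes
`X`, the later ones are rewritten for the new `P 3`. Row `1` is zero off index `2`, also at the
indices `≥ 3` that no scheme reads. -/
def shiftRows (a b : R) (h : ℕ → ℕ → R) : ℕ → ℕ → R :=
  update (fun j => shiftCoeff a b (h j)) 1 (Pi.single 2 1)

@[simp]
theorem shiftRows_one (a b : R) (h : ℕ → ℕ → R) :
    shiftRows a b h 1 = Pi.single 2 1 :=
  Function.update_self ..

theorem shiftRows_of_two_le (a b : R) (h : ℕ → ℕ → R) {j : ℕ} (hj : 2 ≤ j) :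
    shiftRows a b h j = shiftCoeff a b (h j) :=
  Function.update_of_ne (by lia) ..

end LinearCombinations

namespace SchemeP

variable {k : ℕ} {h g : ℕ → ℕ → ℂ} {P : ℕ → ℂ[X]} {a b : ℂ}

theorem apply_three (hP : SchemeP k h g P) (hk : 1 ≤ k) :
    P 3 = (C (h 1 1) + C (h 1 2) * X) * (C (g 1 1) + C (g 1 2) * X) := by
  obtain ⟨P_one, P_two, P_mul⟩ := hP
  simpa [Finset.sum_Icc_succ_top, P_one, P_two] using P_mul 1 le_rfl hk

theorem sum_shiftCoeff (hP : SchemeP k h g P) (hP3 : P 3 = X ^ 2 + (C a + C b * X))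
    (y : ℕ → ℂ) {n : ℕ} (hn : 3 ≤ n) :
    ∑ i ∈ Finset.Icc 1 n, C (shiftCoeff a b y i) * update P 3 (X ^ 2) i =
      ∑ i ∈ Finset.Icc 1 n, C (y i) * P i := by
  obtain ⟨P_one, P_two, -⟩ := hP
  simp only [← smul_eq_C_mul]
  refine sum_Icc_shiftCoeff_smul_update ?_ y hn
  rw [hP3, P_one, P_two, smul_eq_C_mul, smul_eq_C_mul, mul_one]

theorem shift (hP : SchemeP k h g P) (hP3 : P 3 = X ^ 2 + (C a + C b * X)) :
    SchemeP k (shiftRows a b h) (shiftRows a b g) (update P 3 (X ^ 2)) := by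
  refine ⟨by simp [hP.1], by simp [hP.2.1], fun j hj hjk => ?_⟩
  obtain rfl | hj2 := hj.eq_or_lt
  · simp [Finset.sum_Icc_succ_top, hP.2.1, sq]
  · rw [shiftRows_of_two_le a b h hj2, shiftRows_of_two_le a b g hj2,
      hP.sum_shiftCoeff hP3 (h j) (by lia), hP.sum_shiftCoeff hP3 (g j) (by lia),
      Function.update_of_ne (by lia), hP.2.2 j hj hjk]

theorem schemeOutput_shift (hP : SchemeP k h g P) (hP3 : P 3 = X ^ 2 + (C a + C b * X))
    (hk : 1 ≤ k) (y : ℕ → ℂ) :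
    SchemeOutput k (shiftCoeff a b y) (update P 3 (X ^ 2)) = SchemeOutput k y P :=
  hP.sum_shiftCoeff hP3 y (by lia)

end SchemeP

/-- Eliminating the constant coefficients of the first multiplication:
given a scheme with `h 1 2 = g 1 2 = 1` (so `P 3 = α + β • X + X ^ 2` with
`α = h 1 1 * g 1 1`, `β = h 1 1 + g 1 1`), the modified scheme with
`h̃ 1 1 = g̃ 1 1 = 0`, `h̃ 1 2 = g̃ 1 2 = 1` (so `P̃ 3 = X ^ 2`),
`h̃ j 1 = h j 1 + α * h j 3`, `h̃ j 2 = h j 2 + β * h j 3` (likewise for `g`) for `j ≥ 2`,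
`ỹ 1 = y 1 + α * y 3`, `ỹ 2 = y 2 + β * y 3`, all other coefficients unchanged,
satisfies `P̃ j = P j` for `4 ≤ j ≤ k + 2` and has the same output polynomial. -/
theorem scheme_first_row_shift (k : ℕ) (hk : 1 ≤ k) (h g : ℕ → ℕ → ℂ) (y : ℕ → ℂ)
    (P : ℕ → Polynomial ℂ) (hP : SchemeP k h g P)
    (h12 : h 1 2 = 1) (g12 : g 1 2 = 1) :
    ∃ (h' g' : ℕ → ℕ → ℂ) (y' : ℕ → ℂ) (P' : ℕ → Polynomial ℂ),
      SchemeP k h' g' P' ∧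
      h' 1 1 = 0 ∧ g' 1 1 = 0 ∧ h' 1 2 = 1 ∧ g' 1 2 = 1 ∧
      P' 3 = Polynomial.X ^ 2 ∧
      (∀ j, 2 ≤ j →
        h' j 1 = h j 1 + h 1 1 * g 1 1 * h j 3 ∧
        g' j 1 = g j 1 + h 1 1 * g 1 1 * g j 3 ∧
        h' j 2 = h j 2 + (h 1 1 + g 1 1) * h j 3 ∧
        g' j 2 = g j 2 + (h 1 1 + g 1 1) * g j 3) ∧
      (∀ j i, 2 ≤ j → 3 ≤ i → h' j i = h j i ∧ g' j i = g j i) ∧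
      y' 1 = y 1 + h 1 1 * g 1 1 * y 3 ∧
      y' 2 = y 2 + (h 1 1 + g 1 1) * y 3 ∧
      (∀ i, 3 ≤ i → y' i = y i) ∧
      (∀ j, 4 ≤ j → j ≤ k + 2 → P' j = P j) ∧
      SchemeOutput k y' P' = SchemeOutput k y P := by
  set a := h 1 1 * g 1 1 with ha
  set b := h 1 1 + g 1 1 with hb
  have hP3 : P 3 = X ^ 2 + (C a + C b * X) := by
    rw [hP.apply_three hk, h12, g12, ha, hb, C_mul, C_add, C_1]
    ring
  refine ⟨shiftRows a b h, shiftRows a b g, shiftCoeff a b y, update P 3 (X ^ 2), hP.shift hP3,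
    by simp, by simp, by simp, by simp, Function.update_self .., fun j hj => ?_,
    fun j i hj hi => ?_, by simp [mul_comm], by simp [mul_comm],
    fun i hi => shiftCoeff_of_three_le a b y hi, fun j hj _ => Function.update_of_ne (by lia) ..,
    hP.schemeOutput_shift hP3 hk y⟩
  · simp [shiftRows_of_two_le _ _ _ hj, mul_comm]
  · simp [shiftRows_of_two_le _ _ _ hj, shiftCoeff_of_three_le _ _ _ hi]
end
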